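/- Let G be a connected simple graph on n ≥ 8 vertices. Then cfc(G) = n − 3 if and only if G is a tree with maximum degree Δ(G) = n − 3, or G is isomorphic to K_{1,n−1}+e, or G is isomorphic to U_n. -/

import Mathlib

open SimpleGraph

/-- An edge-coloring `c` makes `G` conflict-free connected: every pair of distinct
vertices is joined by a path on which some color appears on exactly one edge. -/
def IsCFCColoring {V : Type*} (G : SimpleGraph V) (c : Sym2 V → ℕ) : Prop :=
  ∀ u v : V, u ≠ v → ∃ p : G.Path u v, ∃ e ∈ (p.1).edges,
    ∀ e' ∈ (p.1).edges, c e' = c e → e' = e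

/-- The conflict-free connection number of `G`: the least `k` such that some
edge-coloring of `G` with colors from `{0, …, k-1}` makes `G` conflict-free connected. -/
noncomputable def cfcNum {V : Type*} (G : SimpleGraph V) : ℕ :=
  sInf {k | ∃ c : Sym2 V → ℕ, (∀ e ∈ G.edgeSet, c e < k) ∧ IsCFCColoring G c}

/-- G is (a copy of) K_{1,n−1}+e : a star whose center v is adjacent to all other
vertices, together with one extra edge joining two leaves x and y. -/
def IsStarPlusEdge {V : Type*} (G : SimpleGraph V) : Prop :=
  ∃ v x y : V, v ≠ x ∧ v ≠ y ∧ x ≠ y ∧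
    ∀ a b : V, G.Adj a b ↔ (((a = v ∨ b = v) ∧ a ≠ b) ∨ s(a, b) = s(x, y))

/-- G is (a copy of) U_n : obtained from the double star S_{3,n−3} — with adjacent
centers u (degree 3, with leaf neighbors x, y) and w (adjacent to u and to all the
remaining vertices) — by adding the edge xy. -/
def IsUnGraph {V : Type*} (G : SimpleGraph V) : Prop :=
  ∃ u w x y : V, u ≠ w ∧ u ≠ x ∧ u ≠ y ∧ w ≠ x ∧ w ≠ y ∧ x ≠ y ∧
    ∀ a b : V, G.Adj a b ↔
      (s(a, b) = s(u, w) ∨ s(a, b) = s(u, x) ∨ s(a, b) = s(u, y) ∨ s(a, b) = s(x, y) ∨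
        ∃ z : V, z ≠ u ∧ z ≠ w ∧ z ≠ x ∧ z ≠ y ∧ s(a, b) = s(w, z))

/-!
Suppose some edges of a connected graph receive pairwise distinct private colors, and that after
deleting them every component has at most `m` edges. Then `m` further colors, used injectively on
each component, give a conflict-free connected coloring. Cutting branches of a spanning tree that
contains all edges at a vertex `v` yields `cfc G ≤ max (deg v) (n - deg v)`, so `n - 4` colors
suffice whenever some degree lies between `4` and `n - 4`; if all degrees are at most `3`, one or
two suitable cuts in a spanning tree also give `n - 4`.

There remains a vertex `v` of degree at least `n - 3` in a graph with a cycle. If `deg v ≥ n - 2`,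
neighbors of `v` linked by short paths off `v` can repeat the colors of other edges at `v`, which
saves colors; if `deg v = n - 3`, an edge at `v` lying on a cycle can be deleted, which leaves
degree `n - 4`. The only graphs for which neither reaches `n - 4` are `K_{1,n-1} + e` and `U_n`.
Conversely, bridges at a common vertex need pairwise distinct colors, because the path joining their
far ends consists of these two bridges alone.
-/

section Colorings

variable {V : Type*} {G T : SimpleGraph V}

/-- `G` has a conflict-free connected edge-coloring with colors `0, …, k - 1`, so that `cfcNum G`
is the least such `k`. -/
def CFCColorable (G : SimpleGraph V) (k : ℕ) : Prop :=
  ∃ c : Sym2 V → ℕ, (∀ e ∈ G.edgeSet, c e < k) ∧ IsCFCColoring G c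

/-- The vertices `u` and `w` are joined by a conflict-free path of `G` under the coloring `c`. -/
def ConflictFreeJoined (G : SimpleGraph V) (c : Sym2 V → ℕ) (u w : V) : Prop :=
  ∃ p : G.Path u w, ∃ e ∈ p.1.edges, ∀ e' ∈ p.1.edges, c e' = c e → e' = e

theorem CFCColorable.cfcNum_le {k : ℕ} (h : CFCColorable G k) : cfcNum G ≤ k :=
  Nat.sInf_le h

theorem CFCColorable.mono_right {k l : ℕ} (hkl : k ≤ l) (h : CFCColorable G k) :
    CFCColorable G l :=
  h.imp fun _ => And.imp_left fun hc e he => (hc e he).trans_le hkl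

theorem ConflictFreeJoined.symm {c : Sym2 V → ℕ} {u w : V} (h : ConflictFreeJoined G c u w) :
    ConflictFreeJoined G c w u := by
  obtain ⟨p, h⟩ := h
  exact ⟨p.reverse, by simpa using h⟩

theorem conflictFreeJoined_of_adj (c : Sym2 V → ℕ) {u w : V} (h : G.Adj u w) :
    ConflictFreeJoined G c u w :=
  ⟨.singleton h, s(u, w), by simp [Path.singleton]⟩

theorem ConflictFreeJoined.mono_of_eqOn {c c' : Sym2 V → ℕ} (hTG : T ≤ G)
    (hc : Set.EqOn c c' T.edgeSet) {u w : V} (h : ConflictFreeJoined T c u w) :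
    ConflictFreeJoined G c' u w := by
  obtain ⟨p, e, he, huniq⟩ := h
  have hcp : ∀ e' ∈ p.1.edges, c e' = c' e' := fun e' he' => hc (p.1.edges_subset_edgeSet he')
  refine ⟨⟨p.1.mapLe hTG, p.2.mapLe hTG⟩, e, by simpa using he, fun e' he' h => ?_⟩
  rw [Walk.edges_mapLe_eq_edges] at he'
  exact huniq e' he' (by rw [hcp e' he', hcp e he, h])

theorem CFCColorable.mono {k : ℕ} (hTG : T ≤ G) (h : CFCColorable T k) : CFCColorable G k := by
  classical
  obtain ⟨c, hck, hc⟩ := h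
  refine ⟨fun e => if e ∈ T.edgeSet then c e else 0, fun e he => ?_, fun u w huw =>
    ConflictFreeJoined.mono_of_eqOn hTG (fun e he => (if_pos he).symm) (hc u w huw)⟩
  have hk : 0 < k := by
    induction e with | h a b =>
    obtain ⟨p, e, he, -⟩ := hc a b (G.ne_of_adj he)
    exact (Nat.zero_le _).trans_lt (hck e (p.1.edges_subset_edgeSet he))
  dsimp only
  split_ifs with heT
  exacts [hck e heT, hk]

theorem exists_injOn_lt_of_ncard_le {α : Type*} {s : Set α} (hs : s.Finite) {m : ℕ}
    (h : s.ncard ≤ m) : ∃ f : α → ℕ, Set.InjOn f s ∧ ∀ a ∈ s, f a < m := by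
  obtain ⟨f, hf, hinj⟩ := hs.exists_injOn_of_encard_le (t := Set.Iio m) (by
    rw [← hs.cast_ncard_eq, ← (Set.finite_Iio m).cast_ncard_eq]
    simpa [Set.ncard_eq_toFinset_card'] using h)
  exact ⟨f, hinj, hf⟩

theorem mem_edgeSet_toSubgraph {e : Sym2 V} (he : e ∈ G.edgeSet) {x : V} (hx : x ∈ e) :
    e ∈ (G.connectedComponentMk x).toSubgraph.edgeSet := by
  induction e with | h a b =>
  have hab : G.Adj a b := he
  rcases Sym2.mem_iff.1 hx with rfl | rfl
  · exact ⟨rfl, (ConnectedComponent.sound hab.reachable).symm, hab⟩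
  · exact ⟨ConnectedComponent.sound hab.reachable, rfl, hab⟩

theorem mem_edgeSet_toSubgraph_of_mem_edges {u w : V} (p : G.Walk u w) {e : Sym2 V}
    (he : e ∈ p.edges) : e ∈ (G.connectedComponentMk u).toSubgraph.edgeSet := by
  classical
  have hx : e.out.1 ∈ p.support := p.mem_support_of_mem_edges he e.out_fst_mem
  rw [ConnectedComponent.sound ⟨p.takeUntil _ hx⟩]
  exact mem_edgeSet_toSubgraph (p.edges_subset_edgeSet he) e.out_fst_mem

variable [Finite V]

theorem exists_coloring_injOn_components (F : SimpleGraph V) {m : ℕ}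
    (h : ∀ C : F.ConnectedComponent, C.toSubgraph.edgeSet.ncard ≤ m) :
    ∃ c : Sym2 V → ℕ, (∀ e ∈ F.edgeSet, c e < m) ∧
      ∀ C : F.ConnectedComponent, Set.InjOn c C.toSubgraph.edgeSet := by
  choose c hinj hlt using fun C => exists_injOn_lt_of_ncard_le (Set.toFinite _) (h C)
  refine ⟨fun e => c (F.connectedComponentMk e.out.1) e,
    fun e he => hlt _ e (mem_edgeSet_toSubgraph he e.out_fst_mem), fun C e he e' he' hee => ?_⟩
  have hC : ∀ e ∈ C.toSubgraph.edgeSet, F.connectedComponentMk e.out.1 = C := fun e he =>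
    C.toSubgraph.mem_verts_of_mem_edge he e.out_fst_mem
  simp only [hC e he, hC e' he'] at hee
  exact hinj C he he' hee

/-- Deleted edges receive private colors; the components share the remaining ones. -/
theorem cfcColorable_of_deleteEdges (hG : G.Connected) (D : Finset (Sym2 V)) {m : ℕ}
    (h : ∀ C : (G.deleteEdges (D : Set (Sym2 V))).ConnectedComponent,
      C.toSubgraph.edgeSet.ncard ≤ m) :
    CFCColorable G (m + D.card) := by
  classical
  obtain ⟨c, hclt, hcinj⟩ := exists_coloring_injOn_components _ h
  obtain ⟨d, hdinj, hdlt⟩ :=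
    exists_injOn_lt_of_ncard_le D.finite_toSet (Set.ncard_coe_finset D).le
  have hmem : ∀ e ∈ G.edgeSet, e ∉ D → e ∈ (G.deleteEdges (D : Set (Sym2 V))).edgeSet :=
    fun e he heD => by simpa [edgeSet_deleteEdges] using ⟨he, heD⟩
  refine ⟨fun e => if e ∈ D then m + d e else c e, fun e he => ?_, fun u w huw => ?_⟩
  · dsimp only
    split_ifs with heD
    · have := hdlt e heD
      omega
    · exact (hclt e (hmem e he heD)).trans_le (Nat.le_add_right _ _)
  obtain ⟨p, hp⟩ := (hG u w).exists_isPath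
  by_cases hpD : ∃ e ∈ p.edges, e ∈ D
  · obtain ⟨e, he, heD⟩ := hpD
    refine ⟨⟨p, hp⟩, e, he, fun e' he' hee => ?_⟩
    by_cases heD' : e' ∈ D
    · simp only [heD, heD', if_true, Nat.add_left_cancel_iff] at hee
      exact hdinj heD' heD hee
    · simp only [heD, heD', if_true, if_false] at hee
      have := hclt e' (hmem e' (p.edges_subset_edgeSet he') heD')
      omega
  · push Not at hpD
    have hmemC : ∀ e ∈ p.edges, e ∈ ((G.deleteEdges (D : Set (Sym2 V))).connectedComponentMk
        u).toSubgraph.edgeSet := fun e he =>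
      mem_edgeSet_toSubgraph_of_mem_edges (p.toDeleteEdges _ hpD) (by simpa using he)
    obtain ⟨e, he⟩ := List.exists_mem_of_ne_nil _ (mt Walk.edges_eq_nil.1 (p.not_nil_of_ne huw))
    refine ⟨⟨p, hp⟩, e, he, fun e' he' hee => ?_⟩
    simp only [hpD e he, hpD e' he', if_false] at hee
    exact hcinj _ (hmemC e' he') (hmemC e he) hee

theorem cfcColorable_cfcNum (hG : G.Connected) : CFCColorable G (cfcNum G) :=
  Nat.sInf_mem (s := {k | CFCColorable G k})
    ⟨_, cfcColorable_of_deleteEdges hG ∅ fun _ => Set.ncard_le_ncard (Set.subset_univ _)⟩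

theorem ncard_edgeSet_toSubgraph_add_one (hG : G.IsAcyclic) (C : G.ConnectedComponent) :
    C.toSubgraph.edgeSet.ncard + 1 = C.supp.ncard := by
  have h := (isTree_iff_connected_and_card.1 (hG.isTree_connectedComponent C)).2
  rw [← C.coe_toSubgraph] at h
  rw [← Subgraph.image_coe_edgeSet_coe, Set.ncard_image_of_injective _
    (Sym2.map.injective Subtype.val_injective)]
  exact h

end Colorings

section Branches

variable {V : Type*} {G T : SimpleGraph V} {v x y z : V}

/-- The branch of `G` at `v` through `x`: the vertices that `x` reaches without passing
through `v`. Cutting `s(v, x)` in a tree separates it from the other vertices. -/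
def branch (G : SimpleGraph V) (v x : V) : Set V :=
  {u | ∃ p : G.Walk x u, v ∉ p.support}

theorem self_mem_branch (h : v ≠ x) : x ∈ branch G v x :=
  ⟨.nil, by simpa using h⟩

theorem notMem_branch : v ∉ branch G v x := fun ⟨p, hp⟩ => hp p.end_mem_support

theorem mem_branch_of_adj {a b : V} (ha : a ∈ branch G v x) (hab : G.Adj a b) (hb : b ≠ v) :
    b ∈ branch G v x := by
  obtain ⟨p, hp⟩ := ha
  exact ⟨p.concat hab, by simp [Walk.support_concat, hp, hb.symm]⟩

theorem exists_mem_branch (hG : G.Connected) {u : V} (hu : u ≠ v) :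
    ∃ y, G.Adj v y ∧ u ∈ branch G v y := by
  obtain ⟨p, hp⟩ := (hG v u).exists_isPath
  cases p with
  | nil => exact absurd rfl hu
  | cons h q => exact ⟨_, h, q, ((Walk.cons_isPath_iff _ _).1 hp).2⟩

theorem mem_edges_of_isBridge (hz : G.IsBridge s(z, v)) (hy : G.Adj v y) (hne : z ≠ y)
    (p : G.Walk z y) : s(z, v) ∈ p.edges := by
  have h := isBridge_iff_forall_walk_mem_edges.1 hz (p.concat hy.symm)
  rw [Walk.edges_concat, List.concat_eq_append, List.mem_append, List.mem_singleton,
    Sym2.congr_left] at h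
  exact h.resolve_right hne

theorem mem_support_of_isBridge (hz : G.IsBridge s(z, v)) (hy : G.Adj v y) (hne : z ≠ y)
    (p : G.Walk z y) : v ∈ p.support :=
  p.snd_mem_support_of_mem_edges (mem_edges_of_isBridge hz hy hne p)

theorem isBridge_of_adj (hT : T.IsTree) (h : T.Adj v x) : T.IsBridge s(v, x) :=
  isAcyclic_iff_forall_adj_isBridge.1 hT.isAcyclic h

theorem disjoint_branch_branch (hT : T.IsTree) (hx : T.Adj v x) (hy : T.Adj v y) (hxy : x ≠ y) :
    Disjoint (branch T v x) (branch T v y) := by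
  rw [Set.disjoint_left]
  rintro u ⟨p, hp⟩ ⟨q, hq⟩
  have h := mem_support_of_isBridge (isBridge_of_adj hT hx.symm) hy hxy (p.append q.reverse)
  simp [Walk.mem_support_append_iff, hp, hq] at h

theorem eq_of_adj_of_notMem_branch (hT : T.IsTree) (hx : T.Adj v x) {a b : V}
    (ha : a ∈ branch T v x) (hb : b ∉ branch T v x) (hab : T.Adj a b) : a = x ∧ b = v := by
  obtain rfl : b = v := by_contra fun h => hb (mem_branch_of_adj ha hab h)
  refine ⟨by_contra fun h => ?_, rfl⟩
  exact Set.disjoint_left.1 (disjoint_branch_branch hT hx hab.symm (Ne.symm h)) ha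
    (self_mem_branch hab.ne')

theorem isCompl_branch_branch (hT : T.IsTree) (h : T.Adj v x) :
    IsCompl (branch T v x) (branch T x v) := by
  constructor
  · rw [Set.disjoint_left]
    rintro u ⟨p, hp⟩ ⟨q, hq⟩
    have hmem := isBridge_iff_forall_walk_mem_edges.1 (isBridge_of_adj hT h) (q.append p.reverse)
    simp only [Walk.edges_append, Walk.edges_reverse, List.mem_append, List.mem_reverse] at hmem
    exact hmem.elim (fun h => hq (q.snd_mem_support_of_mem_edges h))
      fun h => hp (p.fst_mem_support_of_mem_edges h)
  · rw [codisjoint_iff_le_sup]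
    intro u _
    by_contra hu
    simp only [Set.sup_eq_union, Set.mem_union, not_or] at hu
    obtain ⟨p⟩ := hT.connected v u
    obtain ⟨d, -, hd, hd'⟩ := p.exists_boundary_dart (branch T v x ∪ branch T x v)
      (.inr (self_mem_branch h.ne')) (by simp [hu])
    simp only [Set.mem_union, not_or] at hd'
    rcases hd with hd | hd
    · rw [(eq_of_adj_of_notMem_branch hT h hd hd'.1 d.adj).2] at hd'
      exact hd'.2 (self_mem_branch h.ne')
    · rw [(eq_of_adj_of_notMem_branch hT h.symm hd hd'.2 d.adj).2] at hd'
      exact hd'.1 (self_mem_branch h.ne)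

theorem mem_branch_of_reachable (hT : T.IsTree) (h : T.Adj v x) {D : Set (Sym2 V)}
    (hD : s(v, x) ∈ D) {a b : V} (ha : a ∈ branch T v x) (hab : (T.deleteEdges D).Reachable a b) :
    b ∈ branch T v x := by
  by_contra hb
  obtain ⟨p⟩ := hab
  obtain ⟨d, -, hd, hd'⟩ := p.exists_boundary_dart _ ha hb
  obtain ⟨hadj, hdD⟩ := deleteEdges_adj.1 d.adj
  obtain ⟨hdx, hdv⟩ := eq_of_adj_of_notMem_branch hT h hd hd' hadj
  exact hdD (by rwa [hdx, hdv, Sym2.eq_swap])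

theorem ncard_branch_pos [Finite V] (h : v ≠ x) : 0 < (branch G v x).ncard :=
  (Set.ncard_pos).2 ⟨x, self_mem_branch h⟩

theorem ncard_biUnion_branch [Finite V] (hT : T.IsTree) {S : Finset V} (hS : ∀ y ∈ S, T.Adj v y) :
    (⋃ y ∈ S, branch T v y).ncard = ∑ y ∈ S, (branch T v y).ncard := by
  rw [← finsum_mem_coe_finset]
  exact S.finite_toSet.ncard_biUnion (fun _ _ => Set.toFinite _)
    fun y hy y' hy' hne => disjoint_branch_branch hT (hS y hy) (hS y' hy') hne

theorem ncard_branch_lt_of_adj [Finite V] (hT : T.IsTree) (hx : T.Adj v x) (hy : T.Adj x y)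
    (hne : y ≠ v) :
    (branch T x y).ncard < (branch T v x).ncard := by
  have hsub : branch T x y ⊆ branch T v x :=
    (isCompl_branch_branch hT hx).le_left_iff.2 (disjoint_branch_branch hT hy hx.symm hne)
  exact Set.ncard_lt_ncard ⟨hsub, fun h => notMem_branch (h (self_mem_branch hx.ne))⟩

variable [Fintype V]

theorem sum_ncard_branch_add_one [Fintype (T.neighborSet v)] (hT : T.IsTree) :
    ∑ y ∈ T.neighborFinset v, (branch T v y).ncard + 1 = Fintype.card V := by
  have hU : (⋃ y ∈ T.neighborFinset v, branch T v y) = {v}ᶜ := by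
    ext u
    simp only [mem_neighborFinset, Set.mem_iUnion, exists_prop, Set.mem_compl_singleton_iff]
    refine ⟨?_, exists_mem_branch hT.connected⟩
    rintro ⟨y, -, hu⟩ rfl
    exact notMem_branch hu
  rw [← ncard_biUnion_branch hT (fun y hy => (mem_neighborFinset _ _ _).1 hy), hU,
    ← Nat.card_eq_fintype_card, ← Set.ncard_compl_add_ncard {v}, Set.ncard_singleton]

theorem ncard_branch_add_ncard_branch (hT : T.IsTree) (h : T.Adj v x) :
    (branch T v x).ncard + (branch T x v).ncard = Fintype.card V := by
  rw [← (isCompl_branch_branch hT h).compl_eq, Set.ncard_add_ncard_compl,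
    Nat.card_eq_fintype_card]

/-- Cutting off the branches at `v` through `S` leaves components with at most `m` edges. -/
theorem cfcColorable_of_branches (hT : T.IsTree) {S : Finset V} (hS : ∀ y ∈ S, T.Adj v y) {m : ℕ}
    (hle : ∀ y ∈ S, (branch T v y).ncard ≤ m + 1)
    (hrest : Fintype.card V ≤ ∑ y ∈ S, (branch T v y).ncard + (m + 1)) :
    CFCColorable T (m + S.card) := by
  classical
  have hcard : (S.image fun y => s(v, y)).card = S.card :=
    Finset.card_image_of_injective _ fun _ _ => Sym2.congr_right.1
  rw [← hcard]
  refine cfcColorable_of_deleteEdges hT.connected _ fun C => ?_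
  have hC := ncard_edgeSet_toSubgraph_add_one (hT.isAcyclic.anti (deleteEdges_le _)) C
  suffices C.supp.ncard ≤ m + 1 by omega
  by_cases hne : ∃ y ∈ S, ∃ u ∈ C.supp, u ∈ branch T v y
  · obtain ⟨y, hy, u, hu, huy⟩ := hne
    refine (Set.ncard_le_ncard fun w hw => ?_).trans (hle y hy)
    exact mem_branch_of_reachable hT (hS y hy)
      (Finset.mem_coe.2 (Finset.mem_image_of_mem _ hy)) huy
      (ConnectedComponent.exact (hu.trans hw.symm))
  · push Not at hne
    have hsub : C.supp ⊆ (⋃ y ∈ S, branch T v y)ᶜ := fun u hu => by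
      simpa using fun y hy => hne y hy u hu
    have hcompl := Set.ncard_add_ncard_compl (⋃ y ∈ S, branch T v y)
    rw [ncard_biUnion_branch hT hS, Nat.card_eq_fintype_card] at hcompl
    have := Set.ncard_le_ncard hsub
    omega

/-- Cut off the branches at `v` with at least two vertices; the other branches are single edges. -/
theorem cfcColorable_max_degree_of_isTree [Fintype (T.neighborSet v)] (hT : T.IsTree) :
    CFCColorable T (max (T.degree v) (Fintype.card V - T.degree v)) := by
  classical
  set S := (T.neighborFinset v).filter fun y => 2 ≤ (branch T v y).ncard
  set L := (T.neighborFinset v).filter fun y => ¬ 2 ≤ (branch T v y).ncard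
  have hS : ∀ y ∈ S, T.Adj v y ∧ 2 ≤ (branch T v y).ncard := by simp [S]
  have hdeg : S.card + L.card = T.degree v :=
    Finset.card_filter_add_card_filter_not _
  have hL : ∑ y ∈ L, (branch T v y).ncard = L.card := by
    rw [Finset.card_eq_sum_ones]
    refine Finset.sum_congr rfl fun y hy => ?_
    simp only [L, Finset.mem_filter, mem_neighborFinset] at hy
    have := ncard_branch_pos (G := T) hy.1.ne
    omega
  have hsum : ∑ y ∈ S, (branch T v y).ncard + L.card + 1 = Fintype.card V := by
    rw [← sum_ncard_branch_add_one hT (v := v), ← hL, Finset.sum_filter_add_sum_filter_not]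
  have herase : ∀ y ∈ S,
      (branch T v y).ncard + 2 * (S.card - 1) ≤ ∑ y ∈ S, (branch T v y).ncard := by
    intro y hy
    rw [← Finset.add_sum_erase S _ hy, ← Finset.card_erase_of_mem hy, mul_comm]
    exact Nat.add_le_add_left
      (Finset.card_nsmul_le_sum _ _ 2 fun z hz => (hS z (Finset.mem_of_mem_erase hz)).2) _
  have hS2 : 2 * S.card ≤ ∑ y ∈ S, (branch T v y).ncard := by
    rw [mul_comm]
    exact Finset.card_nsmul_le_sum _ _ 2 fun z hz => (hS z hz).2
  have hk : max (T.degree v) (Fintype.card V - T.degree v) =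
      max L.card (Fintype.card V - T.degree v - S.card) + S.card := by omega
  rw [hk]
  refine cfcColorable_of_branches hT (fun y hy => (hS y hy).1) (fun y hy => ?_) (by omega)
  have := herase y hy
  have := Finset.card_pos.2 ⟨y, hy⟩
  omega

theorem cfcColorable_max_degree [Fintype (G.neighborSet v)] (hG : G.Connected) :
    CFCColorable G (max (G.degree v) (Fintype.card V - G.degree v)) := by
  classical
  obtain ⟨T, hle, hTG, hT⟩ := hG.exists_isTree_le_of_le_of_isAcyclic
    (inf_le_left : G ⊓ starGraph v ≤ G) ((isAcyclic_starGraph v).anti inf_le_right)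
  have hdeg : T.degree v = G.degree v := by
    simp only [← card_neighborFinset_eq_degree]
    congr 1
    ext x
    simp only [mem_neighborFinset]
    exact ⟨fun h => hTG h, fun h => hle ⟨h, starGraph_center_adj h.ne⟩⟩
  rw [← hdeg]
  exact (cfcColorable_max_degree_of_isTree hT).mono hTG

theorem exists_five_le_ncard_branch_add_ncard_branch [Fintype (T.neighborSet v)] (hT : T.IsTree)
    (h8 : 8 ≤ Fintype.card V) (hdeg : T.degree v ≤ 3)
    (hle : ∀ y, T.Adj v y → (branch T v y).ncard ≤ 3) :
    ∃ y z, T.Adj v y ∧ T.Adj v z ∧ y ≠ z ∧ 5 ≤ (branch T v y).ncard + (branch T v z).ncard := by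
  classical
  have hsum := sum_ncard_branch_add_one hT (v := v)
  have h3 : 3 ≤ (T.neighborFinset v).card := by
    have := Finset.sum_le_card_nsmul (T.neighborFinset v) (fun y => (branch T v y).ncard) 3
      fun y hy => hle y ((mem_neighborFinset _ _ _).1 hy)
    rw [smul_eq_mul] at this
    omega
  obtain ⟨a, b, c, hab, hac, hbc, hN⟩ := Finset.card_eq_three.1 (le_antisymm hdeg h3)
  have hadj : ∀ y ∈ ({a, b, c} : Finset V), T.Adj v y := fun y hy => by
    rwa [← hN, mem_neighborFinset] at hy
  simp only [Finset.mem_insert, Finset.mem_singleton, forall_eq_or_imp, forall_eq] at hadj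
  obtain ⟨ha, hb, hc⟩ := hadj
  rw [hN, Finset.sum_insert (by simp [hab, hac]), Finset.sum_pair hbc] at hsum
  have := hle a ha
  have := hle b hb
  have := hle c hc
  by_cases h : 5 ≤ (branch T v a).ncard + (branch T v b).ncard
  · exact ⟨a, b, ha, hb, hab, h⟩
  by_cases h : 5 ≤ (branch T v a).ncard + (branch T v c).ncard
  · exact ⟨a, c, ha, hc, hac, h⟩
  · exact ⟨b, c, hb, hc, hbc, by omega⟩

theorem exists_minimal_branch [Nontrivial V] (hT : T.IsTree) {k : ℕ}
    (hk : 2 * k ≤ Fintype.card V + 1) :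
    ∃ v x, T.Adj v x ∧ k ≤ (branch T v x).ncard ∧
      ∀ y, T.Adj x y → y ≠ v → (branch T x y).ncard < k := by
  classical
  obtain ⟨v⟩ := hT.connected.nonempty
  obtain ⟨x, hx⟩ := hT.connected.preconnected.exists_adj_of_nontrivial v
  have hne : {d : T.Dart | k ≤ (branch T d.fst d.snd).ncard}.Nonempty := by
    have := ncard_branch_add_ncard_branch hT hx
    by_cases h : k ≤ (branch T v x).ncard
    · exact ⟨⟨(v, x), hx⟩, h⟩
    · exact ⟨⟨(x, v), hx.symm⟩, show k ≤ (branch T x v).ncard by omega⟩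
  obtain ⟨d, hd, hmin⟩ := Set.exists_min_image _ (fun d : T.Dart => (branch T d.fst d.snd).ncard)
    (Set.toFinite _) hne
  refine ⟨d.fst, d.snd, d.adj, hd, fun y hy hyd => ?_⟩
  by_contra! h
  exact (hmin ⟨(d.snd, y), hy⟩ h).not_gt (ncard_branch_lt_of_adj hT d.adj hy hyd)

/-- Cut a smallest branch with at least four vertices. If its complement is too small, then all
branches at its root have at most three vertices, and two of them are cut instead. -/
theorem cfcColorable_card_sub_four_of_isTree [DecidableRel T.Adj] (hT : T.IsTree)
    (h8 : 8 ≤ Fintype.card V) (hdeg : ∀ v, T.degree v ≤ 3) :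
    CFCColorable T (Fintype.card V - 4) := by
  classical
  have : Nontrivial V := Fintype.one_lt_card_iff_nontrivial.1 (by omega)
  obtain ⟨v, x, hx, h4, hsmall⟩ := exists_minimal_branch hT (k := 4) (by omega)
  have hsum := ncard_branch_add_ncard_branch hT hx
  by_cases hcompl : 4 ≤ (branch T x v).ncard
  · rw [show Fintype.card V - 4 = Fintype.card V - 5 + ({x} : Finset V).card by simp; omega]
    refine cfcColorable_of_branches hT (v := v) (by simpa using hx) ?_ ?_ <;>
      simp only [Finset.mem_singleton, forall_eq, Finset.sum_singleton] <;> omega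
  · have hle : ∀ y, T.Adj x y → (branch T x y).ncard ≤ 3 := by
      intro y hy
      obtain rfl | hyv := eq_or_ne y v
      · omega
      · exact Nat.lt_succ_iff.1 (hsmall y hy hyv)
    obtain ⟨y, z, hy, hz, hyz, h5⟩ :=
      exists_five_le_ncard_branch_add_ncard_branch hT h8 (hdeg x) hle
    have := hle y hy
    have := hle z hz
    rw [show Fintype.card V - 4 = Fintype.card V - 6 + ({y, z} : Finset V).card by
      rw [Finset.card_pair hyz]; omega]
    refine cfcColorable_of_branches hT (v := x) (by simp [hy, hz]) ?_ ?_
    · simp only [Finset.mem_insert, Finset.mem_singleton, forall_eq_or_imp, forall_eq]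
      omega
    · rw [Finset.sum_pair hyz]
      omega

theorem cfcColorable_card_sub_four_of_degree_le_three [DecidableRel G.Adj] (hG : G.Connected)
    (h8 : 8 ≤ Fintype.card V) (hdeg : ∀ v, G.degree v ≤ 3) :
    CFCColorable G (Fintype.card V - 4) := by
  classical
  obtain ⟨T, hTG, hT⟩ := hG.exists_isTree_le
  exact (cfcColorable_card_sub_four_of_isTree hT h8 fun v =>
    (degree_le_of_le hTG).trans (hdeg v)).mono hTG

end Branches

section StarColoring

variable {V : Type*} {G : SimpleGraph V} {v x y : V} {f : V → ℕ} {t : ℕ}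

open Classical in
/-- The coloring that gives the edge `s(v, x)` the color `f x` and every edge off `v` the
color `t`; it serves to color graphs in which `v` is adjacent to nearly all vertices. -/
noncomputable def starColoring (v : V) (f : V → ℕ) (t : ℕ) : Sym2 V → ℕ :=
  Sym2.lift ⟨fun a b => if a = v then f b else if b = v then f a else t, fun a b => by grind⟩

theorem starColoring_apply_center : starColoring v f t s(v, x) = f x := by
  simp [starColoring]

theorem starColoring_of_notMem {e : Sym2 V} (he : v ∉ e) : starColoring v f t e = t := by
  induction e with | h a b =>
  rw [Sym2.mem_iff, not_or] at he
  simp [starColoring, Ne.symm he.1, Ne.symm he.2]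

theorem conflictFreeJoined_of_cons_cons (hx : G.Adj v x) (hy : G.Adj v y) (hne : f x ≠ f y)
    {z : V} {q : G.Walk y z} (hq : q.IsPath) (hvq : v ∉ q.support) (hxq : x ∉ q.support) :
    ConflictFreeJoined G (starColoring v f t) x z := by
  have hp : (Walk.cons hx.symm (Walk.cons hy q)).IsPath := by
    simp [Walk.cons_isPath_iff, hq, hvq, hxq, hx.ne']
  have hcx : starColoring v f t s(x, v) = f x := by
    rw [Sym2.eq_swap, starColoring_apply_center]
  have hcq : ∀ e ∈ q.edges, starColoring v f t e = t := fun e he =>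
    starColoring_of_notMem fun hve => hvq (q.mem_support_of_mem_edges he hve)
  refine ⟨⟨_, hp⟩, ?_⟩
  simp only [Walk.edges_cons, List.mem_cons]
  by_cases hxt : f x = t
  · refine ⟨s(v, y), .inr (.inl rfl), ?_⟩
    rintro e (rfl | rfl | he) hce
    · rw [hcx, starColoring_apply_center] at hce
      exact absurd hce hne
    · rfl
    · rw [hcq e he, starColoring_apply_center, ← hxt] at hce
      exact absurd hce hne
  · refine ⟨s(x, v), .inl rfl, ?_⟩
    rintro e (rfl | rfl | he) hce
    · rfl
    · rw [hcx, starColoring_apply_center] at hce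
      exact absurd hce.symm hne
    · rw [hcq e he, hcx] at hce
      exact absurd hce.symm hxt

/-- `x` and `y` are joined by a path of length at most two whose inner vertex, if any, lies outside
the closed neighborhood of `v`. In a star coloring at `v`, such neighbors `x` and `y` of `v` with
distinct colors may each share their color with other neighbors of `v`. -/
def LinkedOff (G : SimpleGraph V) (v x y : V) : Prop :=
  G.Adj x y ∨ ∃ p, p ≠ v ∧ ¬ G.Adj v p ∧ G.Adj x p ∧ G.Adj p y

theorem LinkedOff.symm (h : LinkedOff G v x y) : LinkedOff G v y x :=
  h.imp Adj.symm fun ⟨p, hpv, hp, hxp, hpy⟩ => ⟨p, hpv, hp, hpy.symm, hxp.symm⟩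

theorem LinkedOff.conflictFreeJoined {z : V} (h : LinkedOff G v y z) (hx : G.Adj v x)
    (hy : G.Adj v y) (hz : G.Adj v z) (hyz : y ≠ z) (hxz : x ≠ z) (hne : f x ≠ f y) :
    ConflictFreeJoined G (starColoring v f t) x z := by
  have hxy : x ≠ y := fun h => hne (congrArg f h)
  rcases h with h | ⟨p, hpv, hp, hyp, hpz⟩
  · refine conflictFreeJoined_of_cons_cons hx hy hne (q := .cons h .nil) ?_ ?_ ?_ <;>
      simp [h.ne, hy.ne, hz.ne, hxz, hxy]
  · have hxp : x ≠ p := by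
      rintro rfl
      exact hp hx
    refine conflictFreeJoined_of_cons_cons hx hy hne (q := .cons hyp (.cons hpz .nil)) ?_ ?_ ?_ <;>
      simp [Walk.cons_isPath_iff, hyp.ne, hpz.ne, hyz, hy.ne, hz.ne, hpv.symm, hxz, hxy, hxp]

theorem conflictFreeJoined_of_adj_of_adj {p : V} (hx : G.Adj v x) (hxp : G.Adj x p) (hpv : p ≠ v)
    (hp : ¬ G.Adj v p) (hxt : f x ≠ t) {u : V} (hu : u = v ∨ G.Adj v u) :
    ConflictFreeJoined G (starColoring v f t) u p := by
  have hcxp : starColoring v f t s(x, p) = t :=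
    starColoring_of_notMem (by simp [hx.ne, hpv.symm])
  rcases hu with rfl | hu
  · refine ⟨⟨.cons hx (.cons hxp .nil), by simp [Walk.cons_isPath_iff, hx.ne, hxp.ne, hpv.symm]⟩,
      s(u, x), by simp, ?_⟩
    simp [starColoring_apply_center, hcxp, hxt.symm]
  obtain rfl | hux := eq_or_ne u x
  · exact conflictFreeJoined_of_adj _ hxp
  have hup : u ≠ p := by
    rintro rfl
    exact hp hu
  by_cases hfu : f u = f x
  · refine ⟨⟨.cons hu.symm (.cons hx (.cons hxp .nil)), by
      simp [Walk.cons_isPath_iff, hx.ne, hxp.ne, hpv.symm, hu.ne', hux, hup]⟩, s(x, p), by simp, ?_⟩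
    simp [Sym2.eq_swap (a := u) (b := v), starColoring_apply_center, hcxp, hfu, hxt]
  · exact conflictFreeJoined_of_cons_cons hu hx hfu (q := .cons hxp .nil) (by simp [hxp.ne])
      (by simp [hx.ne, hpv.symm]) (by simp [hux, hup])

-- The choice `p = v` covers the case in which `v` is adjacent to every other vertex.
theorem isCFCColoring_starColoring {p : V} (hv : ∀ u, u ≠ v → u ≠ p → G.Adj v u)
    (hf : ∀ x z, G.Adj v x → G.Adj v z → x ≠ z → f x = f z →
      ∃ y, G.Adj v y ∧ f y ≠ f x ∧ (LinkedOff G v y x ∨ LinkedOff G v y z))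
    (ht : p ≠ v → ¬ G.Adj v p → ∃ x, G.Adj v x ∧ G.Adj x p ∧ f x ≠ t) :
    IsCFCColoring G (starColoring v f t) := by
  have hnbr : ∀ x z, G.Adj v x → G.Adj v z → x ≠ z →
      ConflictFreeJoined G (starColoring v f t) x z := by
    intro x z hx hz hxz
    by_cases hfxz : f x = f z
    · obtain ⟨y, hy, hfy, h | h⟩ := hf x z hx hz hxz hfxz
      · exact (h.conflictFreeJoined hz hy hx (fun e => hfy (congrArg f e)) hxz.symm
          (hfxz ▸ hfy.symm)).symm
      · exact h.conflictFreeJoined hx hy hz (fun e => hfy (hfxz ▸ congrArg f e)) hxz hfy.symm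
    · exact conflictFreeJoined_of_cons_cons hx hz hfxz (q := .nil) .nil (by simpa using hz.ne)
        (by simpa using hxz)
  have hp : ∀ u w, u ≠ w → w ≠ v → ¬ G.Adj v w →
      ConflictFreeJoined G (starColoring v f t) u w := by
    intro u w huw hwv hw
    obtain rfl : w = p := by_contra fun h => hw (hv w hwv h)
    obtain ⟨x, hx, hxp, hxt⟩ := ht hwv hw
    exact conflictFreeJoined_of_adj_of_adj hx hxp hwv hw hxt
      (or_iff_not_imp_left.2 fun hu => hv u hu huw)
  intro u w huw
  change ConflictFreeJoined G (starColoring v f t) u w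
  obtain rfl | huv := eq_or_ne u v
  · by_cases hw : G.Adj u w
    · exact conflictFreeJoined_of_adj _ hw
    · exact hp u w huw huw.symm hw
  by_cases hu : G.Adj v u
  · obtain rfl | hwv := eq_or_ne w v
    · exact conflictFreeJoined_of_adj _ hu.symm
    by_cases hw : G.Adj v w
    · exact hnbr u w hu hw huw
    · exact hp u w huw hwv hw
  · exact (hp w u huw.symm huv hu).symm

theorem exists_injOn_lt_of_zero_one {N A B : Finset V} {m : ℕ} [DecidableEq V] (hm : 2 ≤ m)
    (hA : A ⊆ N) (hB : B ⊆ N) (hAB : Disjoint A B) (hcard : N.card ≤ A.card + B.card + m) :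
    ∃ f : V → ℕ, (∀ x ∈ N, f x < m) ∧ (∀ x ∈ A, f x = 0) ∧ (∀ x ∈ B, f x = 1) ∧
      Set.InjOn f ↑(N \ (A ∪ B)) := by
  obtain ⟨f, hinj, hlt⟩ := exists_injOn_lt_of_ncard_le (N \ (A ∪ B)).finite_toSet (m := m) (by
    rw [Set.ncard_coe_finset, Finset.card_sdiff_of_subset (Finset.union_subset hA hB),
      Finset.card_union_of_disjoint hAB]
    omega)
  refine ⟨fun x => if x ∈ A then 0 else if x ∈ B then 1 else f x, fun x hx => ?_, fun x hx => ?_,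
    fun x hx => ?_, fun x hx y hy hxy => ?_⟩
  · dsimp only
    split_ifs with h h'
    · omega
    · omega
    · exact hlt x (by simp [hx, h, h'])
  · simp [hx]
  · simp [hx, Finset.disjoint_right.1 hAB hx]
  · have hx' := hx
    have hy' := hy
    simp only [Finset.coe_sdiff, Finset.coe_union, Set.mem_sdiff, Finset.mem_coe, Set.mem_union,
      not_or] at hx' hy'
    simp only [hx', hy', if_false] at hxy
    exact hinj hx hy hxy

theorem cfcColorable_of_linkedOff {p : V} [Fintype (G.neighborSet v)] (hG : G.Connected)
    (hv : ∀ u, u ≠ v → u ≠ p → G.Adj v u) {A B : Finset V} (hAB : Disjoint A B)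
    (hA : ∀ a ∈ A, G.Adj v a ∧ ∃ b ∈ B, LinkedOff G v a b)
    (hB : ∀ b ∈ B, G.Adj v b ∧ ∃ a ∈ A, LinkedOff G v a b)
    {m : ℕ} (hm : 2 ≤ m) (hdeg : G.degree v ≤ A.card + B.card + m) : CFCColorable G m := by
  classical
  obtain ⟨f, hlt, hf0, hf1, hinj⟩ := exists_injOn_lt_of_zero_one hm
    (fun a ha => (mem_neighborFinset G v a).2 (hA a ha).1)
    (fun b hb => (mem_neighborFinset G v b).2 (hB b hb).1) hAB hdeg
  obtain ⟨t, htm, ht⟩ : ∃ t < m, p ≠ v → ¬ G.Adj v p → ∃ x, G.Adj v x ∧ G.Adj x p ∧ f x ≠ t := by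
    by_cases h : p ≠ v ∧ ¬ G.Adj v p
    · have : Nontrivial V := ⟨p, v, h.1⟩
      obtain ⟨x, hpx⟩ := hG.preconnected.exists_adj_of_nontrivial p
      have hx : G.Adj v x := hv x (by rintro rfl; exact h.2 hpx.symm) hpx.ne'
      exact ⟨if f x = 0 then 1 else 0, by split_ifs <;> omega,
        fun _ _ => ⟨x, hx, hpx.symm, by split_ifs <;> omega⟩⟩
    · exact ⟨0, by omega, fun hpv hp => absurd ⟨hpv, hp⟩ h⟩
  have hpartner : ∀ x ∈ A ∪ B, ∃ y, G.Adj v y ∧ f y ≠ f x ∧ LinkedOff G v y x := by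
    intro x hx
    rcases Finset.mem_union.1 hx with hx | hx
    · obtain ⟨b, hb, hxb⟩ := (hA x hx).2
      exact ⟨b, (hB b hb).1, by simp [hf0 x hx, hf1 b hb], hxb.symm⟩
    · obtain ⟨a, ha, hax⟩ := (hB x hx).2
      exact ⟨a, (hA a ha).1, by simp [hf0 a ha, hf1 x hx], hax⟩
  refine ⟨starColoring v f t, fun e he => ?_, isCFCColoring_starColoring hv ?_ ht⟩
  · by_cases hve : v ∈ e
    · obtain ⟨x, rfl⟩ := hve
      rw [starColoring_apply_center]
      exact hlt x ((mem_neighborFinset G v x).2 he)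
    · rwa [starColoring_of_notMem hve]
  · intro x z hx hz hxz hfxz
    by_cases hxAB : x ∈ A ∪ B
    · obtain ⟨y, hy, hne, hyx⟩ := hpartner x hxAB
      exact ⟨y, hy, hne, .inl hyx⟩
    by_cases hzAB : z ∈ A ∪ B
    · obtain ⟨y, hy, hne, hyz⟩ := hpartner z hzAB
      exact ⟨y, hy, hfxz ▸ hne, .inr hyz⟩
    · exact absurd (hinj (by simpa [hx] using hxAB) (by simpa [hz] using hzAB) hfxz) hxz

theorem cfcColorable_of_linkedOff_pair {p : V} [Fintype (G.neighborSet v)] (hG : G.Connected)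
    (hv : ∀ u, u ≠ v → u ≠ p → G.Adj v u) (hx : G.Adj v x) (hy : G.Adj v y) (hne : x ≠ y)
    (hxy : LinkedOff G v x y) {m : ℕ} (hm : 2 ≤ m) (hdeg : G.degree v ≤ m + 2) :
    CFCColorable G m :=
  cfcColorable_of_linkedOff (A := {x}) (B := {y}) hG hv (by simpa using hne)
    (by simpa [hx] using hxy) (by simpa [hy] using hxy) hm (by simp; omega)

end StarColoring

section Classification

variable {V : Type*} {G : SimpleGraph V} {v p q x : V}

theorem isUnGraph_of_triangle (hpv : p ≠ v) (hqv : q ≠ v) (hp : ¬ G.Adj v p) (hq : ¬ G.Adj v q)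
    (hv : ∀ u, u ≠ v → u ≠ p → u ≠ q → G.Adj v u) (hx : G.Adj v x) (hpx : G.Adj p x)
    (hqx : G.Adj q x) (hpq : G.Adj p q) (hN : ∀ a b, G.Adj v a → G.Adj v b → ¬ G.Adj a b)
    (hpu : ∀ a, G.Adj v a → G.Adj p a → a = x) (hqu : ∀ a, G.Adj v a → G.Adj q a → a = x) :
    IsUnGraph G := by
  refine ⟨x, v, p, q, hx.ne', hpx.ne', hqx.ne', hpv.symm, hqv.symm, hpq.ne, fun a b => ⟨?_, ?_⟩⟩
  · intro hab
    have hspoke : ∀ z, G.Adj v z → s(v, z) = s(x, v) ∨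
        ∃ z', z' ≠ x ∧ z' ≠ v ∧ z' ≠ p ∧ z' ≠ q ∧ s(v, z) = s(v, z') := fun z hz => by
      by_cases hzx : z = x
      · exact .inl (hzx ▸ Sym2.eq_swap)
      · exact .inr ⟨z, hzx, hz.ne', fun h => hp (h ▸ hz), fun h => hq (h ▸ hz), rfl⟩
    by_cases ha : a = v
    · subst ha
      have := hspoke b hab
      tauto
    by_cases hb : b = v
    · subst hb
      have := Sym2.eq_swap (a := b) (b := a) ▸ hspoke a hab.symm
      tauto
    have hvertex : ∀ u ≠ v, u = p ∨ u = q ∨ G.Adj v u := fun u hu => by grind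
    have hba := hab.symm
    have := hab.ne
    simp only [Sym2.eq_iff]
    rcases hvertex a ha with rfl | rfl | ha' <;> rcases hvertex b hb with rfl | rfl | hb' <;> grind
  · rintro (h | h | h | h | ⟨z, -, hzv, hzp, hzq, h⟩) <;> rw [← mem_edgeSet, h, mem_edgeSet]
    exacts [hx.symm, hpx.symm, hqx.symm, hpq, hv z hzv hzp hzq]

theorem exists_adj_adj_of_forall_adj_of_ne (hG : G.Connected) (hpv : p ≠ v) (hp : ¬ G.Adj v p)
    (hq : ¬ G.Adj v q) (hqv : q ≠ v) (hv : ∀ u, u ≠ v → u ≠ p → u ≠ q → G.Adj v u) :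
    ∃ x, G.Adj v x ∧ (G.Adj p x ∨ G.Adj q x) := by
  obtain ⟨w⟩ := hG.preconnected p v
  obtain ⟨d, -, hd, hd'⟩ := w.exists_boundary_dart {p, q} (.inl rfl) (by simp [hpv.symm, hqv.symm])
  have hadj : G.Adj p d.snd ∨ G.Adj q d.snd := by
    obtain h | h := hd
    exacts [.inl (h ▸ d.adj), .inr (h ▸ d.adj)]
  simp only [Set.mem_insert_iff, Set.mem_singleton_iff, not_or] at hd'
  refine ⟨d.snd, hv _ (fun h => ?_) hd'.1 hd'.2, hadj⟩
  rw [h] at hadj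
  exact hadj.elim (fun h => hp h.symm) fun h => hq h.symm

theorem exists_mem_edgeSet_of_not_isTree [Finite V] (hG : G.Connected) (hT : ¬ G.IsTree) (v : V)
    (par : V → V) : ∃ e ∈ G.edgeSet, ∀ w ≠ v, e ≠ s(w, par w) := by
  by_contra! hcon
  refine hT (isTree_iff_connected_and_card.2
    ⟨hG, le_antisymm ?_ hG.card_vert_le_card_edgeSet_add_one⟩)
  have hsub : G.edgeSet ⊆ (fun w => s(w, par w)) '' {v}ᶜ := fun e he =>
    let ⟨w, hw, h⟩ := hcon e he
    ⟨w, hw, h.symm⟩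
  calc G.edgeSet.ncard + 1 ≤ ({v}ᶜ : Set V).ncard + 1 :=
        Nat.add_le_add_right ((Set.ncard_le_ncard hsub).trans Set.ncard_image_le) 1
    _ = Nat.card V := by
        rw [add_comm, ← Set.ncard_singleton v, Set.ncard_add_ncard_compl]

theorem adj_and_exists_adj_of_not_isTree [Finite V] (hG : G.Connected) (hT : ¬ G.IsTree)
    (hpv : p ≠ v) (hqv : q ≠ v) (hpq : p ≠ q) (hp : ¬ G.Adj v p) (hq : ¬ G.Adj v q)
    (hv : ∀ u, u ≠ v → u ≠ p → u ≠ q → G.Adj v u) (hx : G.Adj v x) (hpx : G.Adj p x)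
    (hN : ∀ a b, G.Adj v a → G.Adj v b → ¬ G.Adj a b)
    (hunique : ∀ r ≠ v, ∀ a b, G.Adj v a → G.Adj v b → G.Adj r a → G.Adj r b → a = b) :
    G.Adj p q ∧ ∃ a, G.Adj v a ∧ G.Adj q a := by
  classical
  have : Nontrivial V := ⟨q, v, hqv⟩
  obtain ⟨y, hqy⟩ := hG.preconnected.exists_adj_of_nontrivial q
  have hy : y ≠ p → G.Adj v y := fun h => hv y (fun hyv => hq (hyv ▸ hqy.symm)) h hqy.ne'
  obtain ⟨e, he, hev⟩ := exists_mem_edgeSet_of_not_isTree hG hT v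
    fun w => if w = p then x else if w = q then y else v
  have hep : e ≠ s(p, x) := by simpa using hev p hpv
  have heq : e ≠ s(q, y) := by simpa [hpq.symm] using hev q hqv
  have hespoke : ∀ w, G.Adj v w → e ≠ s(w, v) := fun w hw => by
    have hwp : w ≠ p := fun h => hp (h ▸ hw)
    have hwq : w ≠ q := fun h => hq (h ▸ hw)
    simpa [hwp, hwq] using hev w hw.ne'
  by_contra! hcon
  have hepq : e ≠ s(p, q) := fun h => by
    obtain rfl | hyp := eq_or_ne y p
    · exact heq (h.trans Sym2.eq_swap)
    · exact hcon (by rwa [← mem_edgeSet, ← h]) y (hy hyp) hqy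
  have hp_off : ∀ a, e = s(p, a) → ¬ G.Adj p a := fun a h hpa => by
    have ha : G.Adj v a := hv a (fun hav => hp (hav ▸ hpa.symm)) hpa.ne' fun haq => hepq (haq ▸ h)
    exact hep (hunique p hpv a x ha hx hpa hpx ▸ h)
  have hq_off : ∀ a, e = s(q, a) → ¬ G.Adj q a := fun a h hqa => by
    have ha : G.Adj v a := hv a (fun hav => hq (hav ▸ hqa.symm))
      (fun hap => hepq ((hap ▸ h).trans Sym2.eq_swap)) hqa.ne'
    obtain rfl | hyp := eq_or_ne y p
    · exact hcon hqy.symm a ha hqa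
    · exact heq (hunique q hqv a y ha (hy hyp) hqa hqy ▸ h)
  have hN_end : ∀ a b, e = s(a, b) → G.Adj a b → G.Adj v a := fun a b h hab =>
    hv a (fun hav => hespoke b (hav ▸ hab) (h.trans (hav ▸ Sym2.eq_swap)))
      (fun hap => hp_off b (hap ▸ h) (hap ▸ hab)) fun haq => hq_off b (haq ▸ h) (haq ▸ hab)
  induction e with | h a b =>
  exact hN a b (hN_end a b rfl he) (hN_end b a Sym2.eq_swap he.symm) he

theorem isUnGraph_of_adj_of_forall_mem_support [Finite V] (hG : G.Connected) (hT : ¬ G.IsTree)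
    (hpv : p ≠ v) (hqv : q ≠ v) (hpq : p ≠ q) (hp : ¬ G.Adj v p) (hq : ¬ G.Adj v q)
    (hv : ∀ u, u ≠ v → u ≠ p → u ≠ q → G.Adj v u) (hx : G.Adj v x) (hpx : G.Adj p x)
    (hcut : ∀ a b, G.Adj v a → G.Adj v b → a ≠ b → ∀ w : G.Walk a b, v ∈ w.support) :
    IsUnGraph G := by
  have hN : ∀ a b, G.Adj v a → G.Adj v b → ¬ G.Adj a b := fun a b ha hb hab => by
    simpa [ha.ne, hb.ne] using hcut a b ha hb hab.ne (.cons hab .nil)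
  have hunique : ∀ r ≠ v, ∀ a b, G.Adj v a → G.Adj v b → G.Adj r a → G.Adj r b → a = b :=
    fun r hr a b ha hb hra hrb => by_contra fun hab => by
      simpa [ha.ne, hb.ne, hr.symm] using hcut a b ha hb hab (.cons hra.symm (.cons hrb .nil))
  obtain ⟨hpq', a, ha, hqa⟩ :=
    adj_and_exists_adj_of_not_isTree hG hT hpv hqv hpq hp hq hv hx hpx hN hunique
  obtain rfl : x = a := by_contra fun hxa => by
    simpa [hx.ne, ha.ne, hpv.symm, hqv.symm] using
      hcut x a hx ha hxa (.cons hpx.symm (.cons hpq' (.cons hqa .nil)))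
  exact isUnGraph_of_triangle hpv hqv hp hq hv hx hpx hqa hpq' hN
    (fun a ha hpa => hunique p hpv a x ha hx hpa hpx)
    fun b hb hqb => hunique q hqv b x hb hx hqb hqa

variable [Fintype V]

theorem cfcColorable_card_sub_four_of_adj_of_adj (hG : G.Connected) (h6 : 6 ≤ Fintype.card V)
    (hv : ∀ u ≠ v, G.Adj v u) {a b c d : V} (ha : a ≠ v) (hb : b ≠ v) (hc : c ≠ v) (hd : d ≠ v)
    (hab : G.Adj a b) (hcd : G.Adj c d) (hne : s(a, b) ≠ s(c, d)) :
    CFCColorable G (Fintype.card V - 4) := by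
  classical
  wlog h : a ≠ d ∧ c ≠ b generalizing c d
  · exact this hd hc hcd.symm (by rwa [Sym2.eq_swap (a := d)]) (by grind [hab.ne, hcd.ne])
  have hdisj : Disjoint ({a, c} : Finset V) {b, d} := by
    simp [hab.ne', hcd.ne', h.1.symm, h.2.symm]
  have hcard : 3 ≤ ({a, c} : Finset V).card + ({b, d} : Finset V).card := by
    have : a ≠ c ∨ b ≠ d := by grind
    rw [Finset.card_insert_eq_ite, Finset.card_insert_eq_ite]
    grind
  have := G.degree_lt_card_verts v
  exact cfcColorable_of_linkedOff (p := v) hG (fun u hu _ => hv u hu) hdisj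
    (by simpa [hv a ha, hv c hc] using ⟨.inl (.inl hab), .inr (.inl hcd)⟩)
    (by simpa [hv b hb, hv d hd] using ⟨.inl (.inl hab), .inr (.inl hcd)⟩) (by omega) (by omega)

theorem isStarPlusEdge_or_cfcColorable (hG : G.Connected) (h6 : 6 ≤ Fintype.card V)
    (hT : ¬ G.IsTree) (hv : ∀ u ≠ v, G.Adj v u) :
    IsStarPlusEdge G ∨ CFCColorable G (Fintype.card V - 4) := by
  obtain ⟨e, he, hev⟩ := exists_mem_edgeSet_of_not_isTree hG hT v fun _ => v
  induction e with | h a b =>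
  have hab : G.Adj a b := he
  have ha : a ≠ v := fun h => hev b (h ▸ hab.ne') (by rw [h, Sym2.eq_swap])
  have hb : b ≠ v := fun h => hev a ha (by rw [h])
  by_cases h : ∃ c d, c ≠ v ∧ d ≠ v ∧ G.Adj c d ∧ s(a, b) ≠ s(c, d)
  · obtain ⟨c, d, hc, hd, hcd, hne⟩ := h
    exact .inr (cfcColorable_card_sub_four_of_adj_of_adj hG h6 hv ha hb hc hd hab hcd hne)
  push Not at h
  refine .inl ⟨v, a, b, ha.symm, hb.symm, hab.ne, fun c d => ⟨fun hcd => ?_, ?_⟩⟩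
  · by_cases hc : c = v
    · exact .inl ⟨.inl hc, hcd.ne⟩
    by_cases hd : d = v
    · exact .inl ⟨.inr hd, hcd.ne⟩
    · exact .inr (h c d hc hd hcd).symm
  · rintro (⟨rfl | rfl, hne⟩ | h)
    · exact hv _ hne.symm
    · exact (hv _ hne).symm
    · rwa [← mem_edgeSet, h]

theorem cfcColorable_card_sub_four_of_forall_adj_of_ne (hG : G.Connected)
    (h6 : 6 ≤ Fintype.card V) (hT : ¬ G.IsTree) (hpv : p ≠ v) (hp : ¬ G.Adj v p)
    (hv : ∀ u, u ≠ v → u ≠ p → G.Adj v u) : CFCColorable G (Fintype.card V - 4) := by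
  classical
  have : Nontrivial V := ⟨p, v, hpv⟩
  have hdeg : G.degree v + 2 ≤ Fintype.card V := by
    have := (Finset.card_le_univ (insert p (insert v (G.neighborFinset v))))
    rw [Finset.card_insert_of_notMem (by simp [hpv, hp]), Finset.card_insert_of_notMem (by simp),
      card_neighborFinset_eq_degree] at this
    omega
  have hN : ∀ {u}, G.Adj u p → G.Adj v u := fun {u} h =>
    hv u (by rintro rfl; exact hp h) h.ne
  have hlink : ∀ {a b}, G.Adj v a → G.Adj v b → a ≠ b → LinkedOff G v a b →
      CFCColorable G (Fintype.card V - 4) := fun ha hb hab h =>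
    cfcColorable_of_linkedOff_pair hG hv ha hb hab h (by omega) (by omega)
  have htwo : ∀ {a b}, G.Adj a p → G.Adj b p → a ≠ b → CFCColorable G (Fintype.card V - 4) :=
    fun ha hb hab => hlink (hN ha) (hN hb) hab (.inr ⟨p, hpv, hp, ha, hb.symm⟩)
  obtain ⟨x, hpx⟩ := hG.preconnected.exists_adj_of_nontrivial p
  obtain ⟨e, he, hev⟩ :=
    exists_mem_edgeSet_of_not_isTree hG hT v fun w => if w = p then x else v
  induction e with | h a b =>
  have hab : G.Adj a b := he
  by_cases ha : a = p
  · subst ha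
    exact htwo hab.symm hpx.symm fun h => hev a hpv (by simp [h])
  by_cases hb : b = p
  · subst hb
    exact htwo hab hpx.symm fun h => hev b hpv (by simp [h, Sym2.eq_swap])
  have hav : a ≠ v := fun h => hev b (h ▸ hab.ne') (by simp [hb, h, Sym2.eq_swap])
  have hbv : b ≠ v := fun h => hev a hav (by simp [ha, h])
  exact hlink (hv a hav ha) (hv b hbv hb) hab.ne (.inl hab)

theorem cfcColorable_of_not_isBridge {k : ℕ} [Fintype (G.neighborSet v)] (hG : G.Connected)
    (hx : G.Adj v x) (hb : ¬ G.IsBridge s(v, x)) (hk : G.degree v = k + 1) :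
    CFCColorable G (max k (Fintype.card V - k)) := by
  classical
  have hN : (G.deleteEdges {s(v, x)}).neighborFinset v = (G.neighborFinset v).erase x := by
    ext u
    simp only [mem_neighborFinset, deleteEdges_adj, Set.mem_singleton_iff, Sym2.congr_right,
      Finset.mem_erase, and_comm]
  have hdeg : (G.deleteEdges {s(v, x)}).degree v = k := by
    rw [← card_neighborFinset_eq_degree, hN, Finset.card_erase_of_mem (by simpa using hx),
      card_neighborFinset_eq_degree, hk, Nat.add_sub_cancel]
  exact hdeg ▸ (cfcColorable_max_degree (v := v) (hG.connected_delete_edge_of_not_isBridge hb)).mono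
    (G.deleteEdges_le _)

theorem isUnGraph_or_cfcColorable [Fintype (G.neighborSet v)] (hG : G.Connected)
    (h8 : 8 ≤ Fintype.card V) (hT : ¬ G.IsTree) (hdeg : G.degree v + 3 = Fintype.card V)
    (hpv : p ≠ v) (hqv : q ≠ v) (hpq : p ≠ q) (hp : ¬ G.Adj v p) (hq : ¬ G.Adj v q)
    (hv : ∀ u, u ≠ v → u ≠ p → u ≠ q → G.Adj v u) :
    IsUnGraph G ∨ CFCColorable G (Fintype.card V - 4) := by
  by_cases hb : ∃ x, G.Adj v x ∧ ¬ G.IsBridge s(v, x)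
  · obtain ⟨x, hx, hb⟩ := hb
    have := cfcColorable_of_not_isBridge (k := Fintype.card V - 4) hG hx hb (by omega)
    rw [max_eq_left (by omega)] at this
    exact .inr this
  push Not at hb
  have hcut : ∀ a b, G.Adj v a → G.Adj v b → a ≠ b → ∀ w : G.Walk a b, v ∈ w.support :=
    fun a b ha hb' hab w => mem_support_of_isBridge (Sym2.eq_swap ▸ hb a ha) hb' hab w
  obtain ⟨x, hx, hpx | hqx⟩ := exists_adj_adj_of_forall_adj_of_ne hG hpv hp hq hqv hv
  · exact .inl (isUnGraph_of_adj_of_forall_mem_support hG hT hpv hqv hpq hp hq hv hx hpx hcut)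
  · exact .inl (isUnGraph_of_adj_of_forall_mem_support hG hT hqv hpv hpq.symm hq hp
      (fun u h h' h'' => hv u h h'' h') hx hqx hcut)

theorem isStarPlusEdge_or_isUnGraph_or_cfcColorable [Fintype (G.neighborSet v)]
    (hG : G.Connected) (h8 : 8 ≤ Fintype.card V) (hT : ¬ G.IsTree)
    (hdeg : Fintype.card V ≤ G.degree v + 3) :
    IsStarPlusEdge G ∨ IsUnGraph G ∨ CFCColorable G (Fintype.card V - 4) := by
  classical
  obtain ⟨S, hmem, hcard⟩ : ∃ S : Finset V, (∀ u, u ∈ S ↔ u ≠ v ∧ ¬ G.Adj v u) ∧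
      G.degree v + S.card + 1 = Fintype.card V := by
    refine ⟨(insert v (G.neighborFinset v))ᶜ, by simp, ?_⟩
    rw [← Finset.card_add_card_compl (insert v (G.neighborFinset v)),
      Finset.card_insert_of_notMem (by simp), card_neighborFinset_eq_degree]
    ring
  have hadj : ∀ u, u ≠ v → u ∉ S → G.Adj v u := fun u huv hu => by
    simpa [huv] using mt (hmem u).2 hu
  obtain h | h | h : S.card = 0 ∨ S.card = 1 ∨ S.card = 2 := by omega
  · rw [Finset.card_eq_zero] at h
    subst h
    exact (isStarPlusEdge_or_cfcColorable hG (by omega) hT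
      fun u hu => hadj u hu (by simp)).imp_right .inr
  · obtain ⟨p, rfl⟩ := Finset.card_eq_one.1 h
    obtain ⟨hpv, hp⟩ := (hmem p).1 (by simp)
    exact .inr <| .inr <| cfcColorable_card_sub_four_of_forall_adj_of_ne hG (by omega) hT hpv hp
      fun u huv hup => hadj u huv (by simpa using hup)
  · obtain ⟨p, q, hpq, rfl⟩ := Finset.card_eq_two.1 h
    obtain ⟨hpv, hp⟩ := (hmem p).1 (by simp)
    obtain ⟨hqv, hq⟩ := (hmem q).1 (by simp)
    exact .inr <| isUnGraph_or_cfcColorable hG h8 hT (by omega) hpv hqv hpq hp hq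
      fun u huv hup huq => hadj u huv (by simp [hup, huq])

theorem isTree_or_isStarPlusEdge_or_isUnGraph_or_cfcColorable [DecidableRel G.Adj]
    (hG : G.Connected) (h8 : 8 ≤ Fintype.card V) :
    (G.IsTree ∧ Fintype.card V - 3 ≤ G.maxDegree) ∨ IsStarPlusEdge G ∨ IsUnGraph G ∨
      CFCColorable G (Fintype.card V - 4) := by
  have := hG.nonempty
  obtain ⟨v, hmax⟩ := G.exists_maximal_degree_vertex
  obtain h3 | ⟨h4, hle⟩ | hge : G.degree v ≤ 3 ∨
      (4 ≤ G.degree v ∧ G.degree v + 4 ≤ Fintype.card V) ∨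
      Fintype.card V ≤ G.degree v + 3 := by omega
  · exact .inr <| .inr <| .inr <| cfcColorable_card_sub_four_of_degree_le_three hG h8
      fun u => (G.degree_le_maxDegree u).trans (hmax.trans_le h3)
  · exact .inr <| .inr <| .inr <| (cfcColorable_max_degree (v := v) hG).mono_right (by omega)
  · by_cases hT : G.IsTree
    · exact .inl ⟨hT, by omega⟩
    · exact .inr (isStarPlusEdge_or_isUnGraph_or_cfcColorable hG h8 hT hge)

end Classification

section LowerBounds

variable {V : Type*} {G : SimpleGraph V} {v z z' : V}

theorem edges_eq_of_isBridge (hz : G.IsBridge s(z, v)) (hz' : G.IsBridge s(z', v))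
    (hzv : G.Adj z v) (hzv' : G.Adj z' v) (hne : z ≠ z') {p : G.Walk z z'} (hp : p.IsPath) :
    p.edges = [s(z, v), s(v, z')] := by
  have h : s(z, v) ∈ p.edges := mem_edges_of_isBridge hz hzv'.symm hne p
  have h' : s(z', v) ∈ p.edges := by
    simpa using mem_edges_of_isBridge hz' hzv.symm hne.symm p.reverse
  cases p with
  | nil => exact absurd rfl hne
  | cons hadj q =>
    obtain rfl := hp.eq_snd_of_mem_edges h
    simp only [Walk.snd_cons, Walk.edges_cons, List.mem_cons, Sym2.congr_left] at h' ⊢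
    rw [hp.of_cons.eq_adj_toWalk_of_mem_edges (Sym2.eq_swap ▸ h'.resolve_left hne.symm)]
    rfl

theorem card_le_cfcNum_of_isBridge (hG : G.Connected) [Finite V] {B : Finset V}
    (hadj : ∀ z ∈ B, G.Adj z v) (hB : ∀ z ∈ B, G.IsBridge s(z, v)) : B.card ≤ cfcNum G := by
  obtain ⟨c, hc, hcfc⟩ := cfcColorable_cfcNum hG
  rw [← Finset.card_range (cfcNum G)]
  refine Finset.card_le_card_of_injOn (fun z => c s(z, v))
    (fun z hz => by simpa using hc s(z, v) (hadj z hz)) fun z hz z' hz' hzz' => ?_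
  by_contra hne
  obtain ⟨p, e, he, huniq⟩ := hcfc z z' hne
  rw [edges_eq_of_isBridge (hB z hz) (hB z' hz') (hadj z hz) (hadj z' hz') hne p.2,
    Sym2.eq_swap (a := v)] at he huniq
  have hne' : s(z, v) ≠ s(z', v) := by rwa [Ne, Sym2.congr_left]
  simp only [List.mem_cons, List.not_mem_nil, or_false, forall_eq_or_imp, forall_eq] at he huniq
  obtain rfl | rfl := he
  · exact hne' (huniq.2 hzz'.symm).symm
  · exact hne' (huniq.1 hzz')

theorem isBridge_of_forall_adj {A : Set V} (hz : z ∈ A) (hv : v ∉ A)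
    (hA : ∀ a ∈ A, ∀ b ∉ A, G.Adj a b → s(a, b) = s(z, v)) : G.IsBridge s(z, v) := by
  rw [isBridge_iff]
  rintro ⟨p⟩
  obtain ⟨d, -, hd, hd'⟩ := p.exists_boundary_dart A hz hv
  have hadj := deleteEdges_adj.1 d.adj
  exact hadj.2 (hA _ hd _ hd' hadj.1)

theorem isBridge_of_forall_adj_eq (hne : z ≠ v) (hz : ∀ b, G.Adj z b → b = v) :
    G.IsBridge s(z, v) :=
  isBridge_of_forall_adj (A := {z}) rfl hne.symm <| by
    rintro a rfl b - hab
    rw [hz b hab]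

theorem maxDegree_le_cfcNum [Fintype V] [DecidableRel G.Adj] (hT : G.IsTree) :
    G.maxDegree ≤ cfcNum G := by
  have := hT.connected.nonempty
  obtain ⟨v, hmax⟩ := G.exists_maximal_degree_vertex
  rw [hmax, ← card_neighborFinset_eq_degree]
  refine card_le_cfcNum_of_isBridge hT.connected (v := v) (fun z hz => ?_) fun z hz => ?_
  · exact ((mem_neighborFinset ..).1 hz).symm
  · exact Sym2.eq_swap ▸ isBridge_of_adj hT ((mem_neighborFinset ..).1 hz)

end LowerBounds

section Extremal

variable {V : Type*} {G : SimpleGraph V}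

theorem IsUnGraph.exists_forall_isBridge (h : IsUnGraph G) :
    ∃ w x y, w ≠ x ∧ w ≠ y ∧ x ≠ y ∧ (∀ z, G.Adj w z ↔ z ≠ w ∧ z ≠ x ∧ z ≠ y) ∧
      ∀ z, G.Adj w z → G.IsBridge s(z, w) := by
  obtain ⟨u, w, x, y, huw, hux, huy, hwx, hwy, hxy, h⟩ := h
  simp only [Sym2.eq_iff] at h
  have hN : ∀ z, G.Adj w z ↔ z ≠ w ∧ z ≠ x ∧ z ≠ y := fun z => by
    rw [h]
    constructor
    · grind
    · rintro ⟨hzw, hzx, hzy⟩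
      by_cases hzu : z = u
      · exact .inl (.inr ⟨rfl, hzu⟩)
      · exact .inr (.inr (.inr (.inr ⟨z, hzu, hzw, hzx, hzy, .inl ⟨rfl, rfl⟩⟩)))
  refine ⟨w, x, y, hwx, hwy, hxy, hN, fun z hz => ?_⟩
  rw [hN] at hz
  obtain rfl | hzu := eq_or_ne z u
  · refine isBridge_of_forall_adj (A := {z, x, y}) (.inl rfl) (by simp [huw.symm, hwx, hwy]) ?_
    intro a ha b hb hab
    simp only [Set.mem_insert_iff, Set.mem_singleton_iff, not_or] at ha hb
    have := (h _ _).1 hab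
    rw [Sym2.eq_iff]
    grind
  · refine isBridge_of_forall_adj_eq hz.1 fun b hzb => ?_
    have := (h _ _).1 hzb
    grind

variable [Fintype V]

theorem IsStarPlusEdge.cfcNum_eq (hG : G.Connected) (h5 : 5 ≤ Fintype.card V)
    (h : IsStarPlusEdge G) : cfcNum G = Fintype.card V - 3 := by
  classical
  obtain ⟨v, x, y, hvx, hvy, hxy, h⟩ := h
  have hv : ∀ u ≠ v, G.Adj v u := fun u hu => (h _ _).2 (.inl ⟨.inl rfl, hu.symm⟩)
  refine le_antisymm ?_ ?_
  · have := G.degree_lt_card_verts v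
    exact (cfcColorable_of_linkedOff_pair (p := v) hG (fun u hu _ => hv u hu) (hv x hvx.symm)
      (hv y hvy.symm) hxy (.inl ((h _ _).2 (.inr rfl))) (by omega) (by omega)).cfcNum_le
  · have hB : ({v, x, y}ᶜ : Finset V).card = Fintype.card V - 3 := by
      rw [Finset.card_compl, Finset.card_eq_three.2 ⟨v, x, y, hvx, hvy, hxy, rfl⟩]
    rw [← hB]
    refine card_le_cfcNum_of_isBridge hG (v := v) (fun z hz => ?_) fun z hz => ?_ <;>
      simp only [Finset.mem_compl, Finset.mem_insert, Finset.mem_singleton, not_or] at hz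
    · exact (hv z hz.1).symm
    · refine isBridge_of_forall_adj_eq hz.1 fun b hzb => ?_
      have := (h _ _).1 hzb
      rw [Sym2.eq_iff] at this
      grind

theorem IsUnGraph.cfcNum_eq (hG : G.Connected) (h6 : 6 ≤ Fintype.card V)
    (h : IsUnGraph G) : cfcNum G = Fintype.card V - 3 := by
  classical
  obtain ⟨w, x, y, hwx, hwy, hxy, hN, hbridge⟩ := h.exists_forall_isBridge
  have hdeg : G.degree w = Fintype.card V - 3 := by
    have hNw : G.neighborFinset w = {w, x, y}ᶜ := by
      ext z
      simp [hN]
    rw [← card_neighborFinset_eq_degree, hNw, Finset.card_compl,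
      Finset.card_eq_three.2 ⟨w, x, y, hwx, hwy, hxy, rfl⟩]
  refine le_antisymm ?_ ?_
  · exact ((cfcColorable_max_degree (v := w) hG).mono_right (by omega)).cfcNum_le
  · rw [← hdeg, ← card_neighborFinset_eq_degree]
    exact card_le_cfcNum_of_isBridge hG (fun z hz => ((mem_neighborFinset ..).1 hz).symm)
      fun z hz => hbridge z ((mem_neighborFinset ..).1 hz)

end Extremal

/-- For a connected graph G on n ≥ 8 vertices, cfc(G) = n − 3 iff G is a tree with
Δ(G) = n − 3, or G is K_{1,n−1}+e, or G is U_n. -/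
theorem cfcNum_eq_card_sub_three_iff {V : Type*} [Fintype V] (G : SimpleGraph V)
    [DecidableRel G.Adj] (hG : G.Connected) (n : ℕ) (hn : Fintype.card V = n)
    (h8 : 8 ≤ n) :
    cfcNum G = n - 3 ↔
      (G.IsTree ∧ G.maxDegree = n - 3) ∨ IsStarPlusEdge G ∨ IsUnGraph G := by
  subst hn
  constructor
  · intro h
    obtain ⟨hT, hm⟩ | hS | hU | hk :=
      isTree_or_isStarPlusEdge_or_isUnGraph_or_cfcColorable hG h8
    · exact .inl ⟨hT, le_antisymm (h ▸ maxDegree_le_cfcNum hT) hm⟩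
    · exact .inr (.inl hS)
    · exact .inr (.inr hU)
    · have := hk.cfcNum_le
      omega
  · rintro (⟨hT, hm⟩ | hS | hU)
    · have := hG.nonempty
      obtain ⟨v, hmax⟩ := G.exists_maximal_degree_vertex
      have hk : CFCColorable G (Fintype.card V - 3) :=
        (cfcColorable_max_degree (v := v) hG).mono_right (by omega)
      exact le_antisymm hk.cfcNum_le (hm ▸ maxDegree_le_cfcNum hT)
    · exact hS.cfcNum_eq hG (by omega)
    · exact hU.cfcNum_eq hG (by omega)
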